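/- Let 1 ≤ k < ℓ, let T be a labelled tree on {1,…,k} and let v ∈ {1,…,k}. Then the number of labelled trees T' on {1,…,ℓ} such that the subgraph of T' induced by {1,…,k} equals T, exactly one edge of T' joins {1,…,k} to {k+1,…,ℓ}, and that edge is incident to v, equals (ℓ−k)^{ℓ−k−1}. -/

import Mathlib

/-!
A supertree of `T` attached at `v` is the same as a tree `U` on the new vertices together with a
new vertex `w`: it is the disjoint union of `T` and `U` with the edge `vw` added. With `m` new
vertices, Cayley's formula gives `m ^ (m - 2) * m = m ^ (m - 1)` of them.

Cayley's formula follows from the count of rooted forests. Let `F r n` be the number of forests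
with `r` prescribed roots and `n` further vertices. If `S` is the set of children of the roots,
such a forest consists of a map from `S` to the roots and a forest with set of roots `S`, whence
`F r n = ∑ S, r ^ #S * F #S (n - #S)`, and by induction and the binomial theorem
`(r + n) * F r n = r * (r + n) ^ n`. Trees on `n + 1` vertices are the case `r = 1`.
-/

universe u

section Sum

open SimpleGraph

variable {V W : Type*} {G : SimpleGraph V} {H : SimpleGraph W}

theorem reachable_of_forall_adj (f : V → W) (hf : ∀ x y, G.Adj x y → H.Reachable (f x) (f y))
    {u v : V} (h : G.Reachable u v) : H.Reachable (f u) (f v) := by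
  rw [reachable_iff_reflTransGen] at h ⊢
  exact h.lift' f fun x y hxy => (reachable_iff_reflTransGen _ _).1 (hf x y hxy)

theorem isAcyclic_sum (hG : G.IsAcyclic) (hH : H.IsAcyclic) : (G ⊕g H).IsAcyclic := by
  rw [isAcyclic_iff_forall_adj_isBridge] at hG hH ⊢
  rintro (x | x) (y | y) hxy
  · refine fun h => hG (sum_adj_inl.1 hxy)
      (reachable_of_forall_adj (Sum.elim id fun _ => x) ?_ h)
    rintro (a | a) (b | b) hab
    · exact Adj.reachable (by simpa using hab)
    all_goals simp at hab ⊢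
  · simp at hxy
  · simp at hxy
  · refine fun h => hH (sum_adj_inr.1 hxy)
      (reachable_of_forall_adj (Sum.elim (fun _ => x) id) ?_ h)
    rintro (a | a) (b | b) hab
    · rfl
    · simp at hab
    · simp at hab
    · exact Adj.reachable (by simpa using hab)

theorem isTree_sum_sup_edge_iff {v : V} {w : W} :
    ((G ⊕g H) ⊔ edge (.inl v) (.inr w)).IsTree ↔ G.IsTree ∧ H.IsTree := by
  constructor
  · -- Collapsing one side to its end of the new edge maps walks to walks in the other side.
    intro h
    have hacyc : (G ⊕g H).IsAcyclic := h.isAcyclic.anti le_sup_left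
    refine ⟨⟨?_, hacyc.embedding Embedding.sumInl⟩, ⟨?_, hacyc.embedding Embedding.sumInr⟩⟩
    · refine (connected_iff _).2 ⟨fun x y => reachable_of_forall_adj (Sum.elim id fun _ => v) ?_
        (h.connected (.inl x) (.inl y)), ⟨v⟩⟩
      rintro (a | a) (b | b) hab
      · exact Adj.reachable (by simpa [edge_adj] using hab)
      all_goals simp_all [edge_adj]
    · refine (connected_iff _).2 ⟨fun x y => reachable_of_forall_adj (Sum.elim (fun _ => w) id) ?_
        (h.connected (.inr x) (.inr y)), ⟨w⟩⟩
      rintro (a | a) (b | b) hab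
      on_goal 4 => exact Adj.reachable (by simpa [edge_adj] using hab)
      all_goals simp_all [edge_adj]
  · rintro ⟨hG, hH⟩
    exact ⟨hG.connected.sum_sup_edge hH.connected,
      (isAcyclic_sum hG.isAcyclic hH.isAcyclic).sup_edge_of_not_reachable
        (not_reachable_sum_inl_inr v w)⟩

end Sum

section Forest

open Finset

variable {V R : Type*}

/-- A map `f : V → R ⊕ V` seen as a parent function: the parent of `x` is a root from `R` or
another vertex of `V`. It is a rooted forest on `R ⊕ V` with set of roots `R` when passing to
parents always terminates, so that every vertex descends from exactly one root. -/
def IsRootedForest (f : V → R ⊕ V) : Prop :=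
  WellFounded fun y x => f x = Sum.inr y

/-- The children of the roots: the vertices whose parent is a root. -/
def rootLayer [Fintype V] (f : V → R ⊕ V) : Finset V :=
  {x | (f x).isLeft}

theorem mem_rootLayer [Fintype V] {f : V → R ⊕ V} {x : V} :
    x ∈ rootLayer f ↔ ∃ r, f x = Sum.inl r := by
  simp [rootLayer, Sum.isLeft_iff]

section Graft

variable [DecidableEq V]

/-- The parent function on `V` obtained from a parent function `q` on the complement of `S`, with
the elements of `S` as roots, by attaching each `x : S` to the root `g x`. -/
def graft (S : Finset V) (g : S → R) (q : {x // x ∉ S} → S ⊕ {x // x ∉ S}) (x : V) : R ⊕ V :=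
  if hx : x ∈ S then Sum.inl (g ⟨x, hx⟩) else Sum.inr (Equiv.sumCompl (· ∈ S) (q ⟨x, hx⟩))

variable (S : Finset V) (g : S → R) (q : {x // x ∉ S} → S ⊕ {x // x ∉ S})

theorem graft_of_mem (x : S) : graft S g q x = Sum.inl (g x) :=
  dif_pos x.2

theorem graft_of_notMem (x : {x // x ∉ S}) :
    graft S g q x = Sum.inr (Equiv.sumCompl (· ∈ S) (q x)) :=
  dif_neg x.2

theorem rootLayer_graft [Fintype V] : rootLayer (graft S g q) = S := by
  ext x
  by_cases hx : x ∈ S <;> simp [mem_rootLayer, graft, hx]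

theorem isRootedForest_graft : IsRootedForest (graft S g q) ↔ IsRootedForest q := by
  refine ⟨fun h => Subrelation.wf ?_ (InvImage.wf Subtype.val h), fun h => ?_⟩
  · intro y x hxy
    rw [InvImage, graft_of_notMem, hxy, Equiv.sumCompl_apply_inr]
  have acc_layer (x : S) : Acc (fun y x => graft S g q x = Sum.inr y) x :=
    .intro _ fun y hy => by simp [graft_of_mem] at hy
  have acc_compl (x : {x // x ∉ S}) : Acc (fun y x => graft S g q x = Sum.inr y) x := by
    induction x using h.induction with
    | _ x ih =>
    refine .intro _ fun y hy => ?_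
    rw [graft_of_notMem, Sum.inr.injEq] at hy
    subst hy
    rcases hqx : q x with z | z
    · exact acc_layer z
    · exact ih z hqx
  exact ⟨fun x => if hx : x ∈ S then acc_layer ⟨x, hx⟩ else acc_compl ⟨x, hx⟩⟩

theorem graft_injective :
    Function.Injective fun t : (S → R) × ({x // x ∉ S} → S ⊕ {x // x ∉ S}) =>
      graft S t.1 t.2 := by
  rintro ⟨g, q⟩ ⟨g', q'⟩ h
  refine Prod.ext (funext fun x => ?_) (funext fun x => ?_)
  · simpa [graft_of_mem] using congrFun h x
  · simpa [graft_of_notMem] using congrFun h x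

theorem exists_graft_rootLayer_eq [Fintype V] (f : V → R ⊕ V) :
    ∃ g q, graft (rootLayer f) g q = f := by
  choose g hg using fun x : rootLayer f => mem_rootLayer.1 x.2
  have exists_parent (x : {x // x ∉ rootLayer f}) : ∃ y, f x = Sum.inr y := by
    have := x.2
    rw [mem_rootLayer] at this
    rcases hfx : f x with r | y
    · exact absurd ⟨r, hfx⟩ this
    · exact ⟨y, rfl⟩
  choose p hp using exists_parent
  refine ⟨g, fun x => (Equiv.sumCompl _).symm (p x), funext fun x => ?_⟩
  by_cases hx : x ∈ rootLayer f
  · rw [graft_of_mem _ _ _ ⟨x, hx⟩]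
    exact (hg ⟨x, hx⟩).symm
  · rw [graft_of_notMem _ _ _ ⟨x, hx⟩, Equiv.apply_symm_apply]
    exact (hp ⟨x, hx⟩).symm

end Graft

/-- The number of rooted forests on `R ⊕ V` with set of roots `R`. -/
noncomputable def forestCount (V R : Type*) : ℕ :=
  Nat.card {f : V → R ⊕ V // IsRootedForest f}

theorem card_forest_rootLayer_eq [Fintype V] [Finite R] (S : Finset V) :
    Nat.card {f : V → R ⊕ V // IsRootedForest f ∧ rootLayer f = S} =
      Nat.card R ^ #S * forestCount {x // x ∉ S} S := by
  classical
  let e (t : (S → R) × {q : {x // x ∉ S} → S ⊕ {x // x ∉ S} // IsRootedForest q}) :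
      {f : V → R ⊕ V // IsRootedForest f ∧ rootLayer f = S} :=
    ⟨graft S t.1 t.2, (isRootedForest_graft S _ _).2 t.2.2, rootLayer_graft S _ _⟩
  have he : Function.Bijective e := by
    constructor
    · rintro ⟨g, q⟩ ⟨g', q'⟩ h
      have hgq : (g, q.1) = (g', q'.1) := graft_injective S (congrArg Subtype.val h)
      simpa only [Prod.mk.injEq, Subtype.ext_iff] using hgq
    · rintro ⟨f, hf, rfl⟩
      obtain ⟨g, q, h⟩ := exists_graft_rootLayer_eq f
      exact ⟨(g, ⟨q, (isRootedForest_graft _ g q).1 (by rwa [h])⟩), Subtype.ext h⟩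
  rw [← Nat.card_congr (Equiv.ofBijective e he), Nat.card_prod, Nat.card_fun, forestCount]
  simp

theorem forestCount_eq_sum [Fintype V] [Finite R] :
    forestCount V R = ∑ S : Finset V, Nat.card R ^ #S * forestCount {x // x ∉ S} S := by
  classical
  let layer (f : {f : V → R ⊕ V // IsRootedForest f}) : Finset V := rootLayer f.1
  simp_rw [← card_forest_rootLayer_eq, forestCount]
  rw [← Nat.card_congr (Equiv.sigmaFiberEquiv layer), Nat.card_sigma]
  exact sum_congr rfl fun S _ => Nat.card_congr
    (Equiv.subtypeSubtypeEquivSubtypeInter IsRootedForest fun f => rootLayer f = S)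

theorem forestCount_eq_zero [Nonempty V] [IsEmpty R] : forestCount V R = 0 := by
  refine @Nat.card_of_isEmpty _ ⟨fun ⟨f, hf⟩ => ?_⟩
  obtain ⟨x, -, hx⟩ := hf.has_min Set.univ Set.univ_nonempty
  rcases hfx : f x with r | y
  · exact isEmptyElim r
  · exact hx y trivial hfx

theorem sum_card_mul_pow_mul_pow (V : Type*) [Fintype V] {M : Type*} [CommSemiring M] (a b : M) :
    ∑ S : Finset V, #S * (a ^ #S * b ^ (Fintype.card V - #S)) =
      Fintype.card V * a * (a + b) ^ (Fintype.card V - 1) := by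
  rw [← powerset_univ, sum_powerset_apply_card
    (fun m => (m : M) * (a ^ m * b ^ (Fintype.card V - m))), card_univ]
  rcases Fintype.card V with _ | n
  · simp
  rw [sum_range_succ', Nat.add_sub_cancel, add_pow, mul_sum]
  simp only [Nat.cast_zero, zero_mul, smul_zero, add_zero]
  refine sum_congr rfl fun j _ => ?_
  have absorption : ((n + 1 : ℕ) : M) * n.choose j = (n + 1).choose (j + 1) * (j + 1 : ℕ) :=
    mod_cast congrArg (Nat.cast (R := M)) (Nat.add_one_mul_choose_eq n j)
  rw [nsmul_eq_mul, Nat.add_sub_add_right]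
  calc
    _ = ((n + 1).choose (j + 1) * (j + 1 : ℕ)) * (a ^ (j + 1) * b ^ (n - j)) := by ring
    _ = _ := by rw [← absorption]; ring

/-- With `r` roots and `n` further vertices the number is `r * (r + n) ^ (n - 1)`; the additional
factor `r + n` avoids the exponent `-1` for `n = 0`. -/
theorem card_add_card_mul_forestCount {V R : Type u} [Fintype V] [Fintype R] :
    (Fintype.card R + Fintype.card V) * forestCount V R =
      Fintype.card R * (Fintype.card R + Fintype.card V) ^ Fintype.card V := by
  classical
  induction hn : Fintype.card V using Nat.strong_induction_on generalizing V R with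
  | _ n ih =>
  subst hn
  rcases isEmpty_or_nonempty V with hV | hV
  · have : Nonempty {f : V → R ⊕ V // IsRootedForest f} := ⟨isEmptyElim, ⟨isEmptyElim⟩⟩
    rw [forestCount, Nat.card_unique, Fintype.card_eq_zero (α := V), pow_zero, add_zero]
  have layer (S : Finset V) : Fintype.card V * forestCount {x // x ∉ S} S =
      #S * Fintype.card V ^ (Fintype.card V - #S) := by
    rcases S.eq_empty_or_nonempty with rfl | hS
    · have : Nonempty {x : V // x ∉ (∅ : Finset V)} := hV.map fun x => ⟨x, notMem_empty x⟩
      rw [forestCount_eq_zero, card_empty, mul_zero, zero_mul]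
    · have hcard : Fintype.card {x // x ∉ S} = Fintype.card V - #S := by
        rw [Fintype.card_subtype_compl, Fintype.card_coe]
      have := hS.card_pos
      have := S.card_le_univ
      have h := ih _ (by omega) (V := {x // x ∉ S}) (R := S) hcard
      rwa [Fintype.card_coe, Nat.add_sub_cancel' this] at h
  have h : Fintype.card V * forestCount V R = Fintype.card V *
      (Fintype.card R * (Fintype.card R + Fintype.card V) ^ (Fintype.card V - 1)) :=
    calc
      _ = ∑ S : Finset V, Fintype.card R ^ #S * (Fintype.card V * forestCount {x // x ∉ S} S) := by
        rw [forestCount_eq_sum, mul_sum, Nat.card_eq_fintype_card]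
        exact sum_congr rfl fun S _ => by ring
      _ = ∑ S : Finset V, #S * (Fintype.card R ^ #S * Fintype.card V ^ (Fintype.card V - #S)) :=
        sum_congr rfl fun S _ => by rw [layer]; ring
      _ = _ := by
        rw [← mul_assoc]
        simpa using sum_card_mul_pow_mul_pow V (Fintype.card R) (Fintype.card V)
  rw [Nat.eq_of_mul_eq_mul_left Fintype.card_pos h, mul_left_comm,
    mul_pow_sub_one Fintype.card_ne_zero]

end Forest

section Cayley

open SimpleGraph

variable {V R : Type*} {f g : V → R ⊕ V}

/-- The graph on `R ⊕ V` in which every vertex of `V` is joined to its parent. -/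
def parentGraph (f : V → R ⊕ V) : SimpleGraph (R ⊕ V) :=
  fromRel fun a b => ∃ x, a = Sum.inr x ∧ b = f x

theorem IsRootedForest.parent_ne (hf : IsRootedForest f) (x : V) : f x ≠ Sum.inr x :=
  hf.irrefl.irrefl x

theorem IsRootedForest.parentGraph_adj (hf : IsRootedForest f) (x : V) :
    (parentGraph f).Adj (Sum.inr x) (f x) :=
  ⟨(hf.parent_ne x).symm, .inl ⟨x, rfl, rfl⟩⟩

theorem eq_or_eq_of_parentGraph_adj {x : V} {b : R ⊕ V} (h : (parentGraph f).Adj (Sum.inr x) b) :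
    b = f x ∨ ∃ y, b = Sum.inr y ∧ f y = Sum.inr x := by
  obtain ⟨-, ⟨y, hy, hb⟩ | ⟨y, hb, hy⟩⟩ := h
  · exact .inl (by rw [hb, Sum.inr_injective hy])
  · exact .inr ⟨y, hb, hy.symm⟩

theorem IsRootedForest.eq_of_parentGraph_eq (hf : IsRootedForest f)
    (h : parentGraph f = parentGraph g) : f = g := by
  funext x
  -- If `f x ≠ g x`, the edge from `x` to `y = f x` comes from `g y = x`, contradicting `f y = g y`.
  induction x using hf.induction with
  | _ x ih =>
  obtain hfx | ⟨y, hfx, hgy⟩ := eq_or_eq_of_parentGraph_adj (h ▸ hf.parentGraph_adj x)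
  · exact hfx
  · exact absurd ((ih y hfx).trans hgy) (hf.asymmetric _ _ hfx)

section Unit

variable {f : V → Unit ⊕ V}

theorem IsRootedForest.parentGraph_connected (hf : IsRootedForest f) :
    (parentGraph f).Connected := by
  have reachable_root (x : V) : (parentGraph f).Reachable (Sum.inr x) (Sum.inl ()) := by
    induction x using hf.induction with
    | _ x ih =>
    refine (hf.parentGraph_adj x).reachable.trans ?_
    rcases hfx : f x with _ | y
    · rfl
    · exact ih y hfx
  refine (connected_iff_exists_forall_reachable _).2 ⟨Sum.inl (), ?_⟩
  rintro (_ | x)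
  · rfl
  · exact (reachable_root x).symm

theorem IsRootedForest.parentGraph_isTree [Finite V] (hf : IsRootedForest f) :
    (parentGraph f).IsTree := by
  refine isTree_iff_connected_and_card.2 ⟨hf.parentGraph_connected, le_antisymm ?_
    hf.parentGraph_connected.card_vert_le_card_edgeSet_add_one⟩
  have edge_subset : (parentGraph f).edgeSet ⊆ Set.range fun x => s(Sum.inr x, f x) := by
    rintro ⟨a, b⟩ ⟨-, ⟨x, rfl, rfl⟩ | ⟨x, rfl, rfl⟩⟩
    · exact ⟨x, rfl⟩
    · exact ⟨x, Sym2.eq_swap⟩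
  have card_edges : Nat.card (parentGraph f).edgeSet ≤ Nat.card V :=
    (Nat.card_mono (Set.toFinite _) edge_subset).trans (Finite.card_range_le _)
  rw [Nat.card_sum, Nat.card_unique (α := Unit)]
  lia

theorem exists_parentGraph_eq {G : SimpleGraph (Unit ⊕ V)} (hG : G.IsTree) :
    ∃ f, IsRootedForest f ∧ parentGraph f = G := by
  have exists_closer (x : V) : ∃ z, G.Adj (.inr x) z ∧
      G.dist z (.inl ()) < G.dist (.inr x) (.inl ()) := by
    obtain ⟨p, hp⟩ := hG.connected.exists_walk_length_eq_dist (.inr x) (.inl ())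
    cases p with
    | cons hadj p => exact ⟨_, hadj, by grind [dist_le p, Walk.length_cons]⟩
  choose f hadj hlt using exists_closer
  have hf : IsRootedForest f :=
    Subrelation.wf (fun {y x} hxy => show _ < _ from hxy ▸ hlt x)
      (measure fun x => G.dist (.inr x) (.inl ())).wf
  have hle : parentGraph f ≤ G := by
    rintro a b ⟨-, ⟨x, rfl, rfl⟩ | ⟨x, rfl, rfl⟩⟩
    · exact hadj x
    · exact (hadj x).symm
  exact ⟨f, hf, hle.antisymm
    ((isTree_iff_minimal_connected.1 hG).2 hf.parentGraph_connected hle)⟩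

end Unit

theorem card_isTree_unit_sum (V : Type*) [Finite V] :
    Nat.card {G : SimpleGraph (Unit ⊕ V) // G.IsTree} = forestCount V Unit := by
  let e (f : {f : V → Unit ⊕ V // IsRootedForest f}) : {G : SimpleGraph (Unit ⊕ V) // G.IsTree} :=
    ⟨parentGraph f.1, f.2.parentGraph_isTree⟩
  refine (Nat.card_congr (Equiv.ofBijective e ⟨fun f g h => ?_, fun ⟨G, hG⟩ => ?_⟩)).symm
  · exact Subtype.ext (f.2.eq_of_parentGraph_eq (congrArg Subtype.val h))
  · obtain ⟨f, hf, rfl⟩ := exists_parentGraph_eq hG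
    exact ⟨⟨f, hf⟩, rfl⟩

theorem card_isTree (V : Type*) [Finite V] [Nonempty V] :
    Nat.card {G : SimpleGraph V // G.IsTree} = Nat.card V ^ (Nat.card V - 2) := by
  obtain ⟨n, hn⟩ := Nat.exists_eq_add_of_le' (Nat.card_pos (α := V))
  obtain ⟨e⟩ : Nonempty (V ≃ Unit ⊕ Fin n) := Finite.card_eq.1 (by simp [hn, add_comm])
  have he (G : SimpleGraph V) : G.IsTree ↔ (e.simpleGraph G).IsTree :=
    (Iso.comap e.symm G).isTree_iff.symm
  rw [Nat.card_congr (e.simpleGraph.subtypeEquiv he), card_isTree_unit_sum, hn]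
  have h := card_add_card_mul_forestCount (V := Fin n) (R := Unit)
  rcases n with _ | n
  · simpa using h
  · simpa [pow_succ', add_comm 1] using h

end Cayley

section Supertree

open SimpleGraph

variable {α β : Type*} {T : SimpleGraph α}

theorem eq_sum_sup_edge_iff {G : SimpleGraph (α ⊕ β)} {U : SimpleGraph β} {v : α} {w : β} :
    G = (T ⊕g U) ⊔ edge (.inl v) (.inr w) ↔
      (∀ i j, G.Adj (.inl i) (.inl j) ↔ T.Adj i j) ∧
      (∀ i j, G.Adj (.inr i) (.inr j) ↔ U.Adj i j) ∧
      ∀ i j, G.Adj (.inl i) (.inr j) ↔ i = v ∧ j = w := by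
  refine ⟨?_, fun ⟨hT, hU, hvw⟩ => ?_⟩
  · rintro rfl
    simp [edge_adj]
  · ext (i | i) (j | j)
    · simp [hT, edge_adj]
    · simp [hvw, edge_adj]
    · simp [G.adj_comm, hvw, edge_adj, and_comm]
    · simp [hU, edge_adj]

theorem card_supertrees_sum [Finite β] [Nonempty β] (hT : T.IsTree) (v : α) :
    Nat.card {G : SimpleGraph (α ⊕ β) // G.IsTree ∧
      (∀ i j, G.Adj (.inl i) (.inl j) ↔ T.Adj i j) ∧
      ∃ w, ∀ i j, G.Adj (.inl i) (.inr j) ↔ i = v ∧ j = w} = Nat.card β ^ (Nat.card β - 1) := by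
  let e (t : {U : SimpleGraph β // U.IsTree} × β) : {G : SimpleGraph (α ⊕ β) // G.IsTree ∧
      (∀ i j, G.Adj (.inl i) (.inl j) ↔ T.Adj i j) ∧
      ∃ w, ∀ i j, G.Adj (.inl i) (.inr j) ↔ i = v ∧ j = w} :=
    have h := eq_sum_sup_edge_iff.1 rfl
    ⟨(T ⊕g t.1) ⊔ edge (.inl v) (.inr t.2), isTree_sum_sup_edge_iff.2 ⟨hT, t.1.2⟩, h.1, t.2, h.2.2⟩
  have he : Function.Bijective e := by
    constructor
    · rintro ⟨⟨U, hU⟩, w⟩ ⟨⟨U', hU'⟩, w'⟩ h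
      obtain ⟨-, hadj, hcross⟩ := eq_sum_sup_edge_iff.1 (rfl : (e (⟨U, hU⟩, w)).1 = _)
      obtain ⟨-, hadj', hcross'⟩ := eq_sum_sup_edge_iff.1 (congrArg Subtype.val h)
      obtain rfl : U = U' := by
        ext x y
        exact (hadj x y).symm.trans (hadj' x y)
      obtain rfl : w = w' := ((hcross' v w).1 ((hcross v w).2 ⟨rfl, rfl⟩)).2
      rfl
    · rintro ⟨G, hG, hold, w, hcross⟩
      have h : G = (T ⊕g G.comap Sum.inr) ⊔ edge (.inl v) (.inr w) :=
        eq_sum_sup_edge_iff.2 ⟨hold, fun _ _ => Iff.rfl, hcross⟩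
      exact ⟨(⟨_, (isTree_sum_sup_edge_iff.1 (h ▸ hG)).2⟩, w), Subtype.ext h.symm⟩
  rw [← Nat.card_congr (Equiv.ofBijective e he), Nat.card_prod, card_isTree]
  obtain ⟨n, hn⟩ := Nat.exists_eq_add_of_le' (Nat.card_pos (α := β))
  rw [hn]
  rcases n with _ | n <;> simp [pow_succ]

theorem card_compl_range {V : Type*} [Finite V] (ι : α ↪ V) :
    Nat.card ↥(Set.range ι)ᶜ = Nat.card V - Nat.card α := by
  rw [Nat.card_coe_set_eq, Set.ncard_compl, ← Nat.card_coe_set_eq,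
    Nat.card_range_of_injective ι.injective]

theorem count_supertrees_general {V : Type*} (ι : α ↪ V) [Finite ↥(Set.range ι)ᶜ]
    [Nonempty ↥(Set.range ι)ᶜ] (hT : T.IsTree) (v : α) :
    Nat.card {G : SimpleGraph V // G.IsTree ∧
      (∀ i j, G.Adj (ι i) (ι j) ↔ T.Adj i j) ∧
      (∀ a b, a ∈ Set.range ι → b ∉ Set.range ι → G.Adj a b → a = ι v) ∧
      ∃! b, b ∉ Set.range ι ∧ G.Adj (ι v) b} =
    Nat.card ↥(Set.range ι)ᶜ ^ (Nat.card ↥(Set.range ι)ᶜ - 1) := by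
  classical
  let e : α ⊕ ↥(Set.range ι)ᶜ ≃ V :=
    ((Equiv.ofInjective ι ι.injective).sumCongr (Equiv.refl _)).trans (Equiv.Set.sumCompl _)
  rw [← card_supertrees_sum hT v]
  refine Nat.card_congr (e.symm.simpleGraph.subtypeEquiv fun G => ?_)
  have hG : G.IsTree ↔ (e.symm.simpleGraph G).IsTree := (Iso.comap e G).isTree_iff.symm
  refine and_congr hG (and_congr Iff.rfl ?_)
  constructor
  · rintro ⟨hv, w, ⟨hw, hvw⟩, huniq⟩
    refine ⟨⟨w, hw⟩, fun i j => ⟨fun hij => ?_, ?_⟩⟩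
    · obtain rfl := ι.injective (hv (ι i) j ⟨i, rfl⟩ j.2 hij)
      exact ⟨rfl, Subtype.ext (huniq j ⟨j.2, hij⟩)⟩
    · rintro ⟨rfl, rfl⟩
      exact hvw
  · rintro ⟨w, hw⟩
    refine ⟨?_, w, ⟨w.2, (hw v w).2 ⟨rfl, rfl⟩⟩, fun b ⟨hb, hvb⟩ =>
      congrArg Subtype.val ((hw v ⟨b, hb⟩).1 hvb).2⟩
    rintro _ b ⟨i, rfl⟩ hb hib
    rw [((hw i ⟨b, hb⟩).1 hib).1]

end Supertree

/-- For `1 ≤ k < ℓ`, a labelled tree `T` on `{1,…,k}` and `v ∈ {1,…,k}`: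
the number of labelled trees `T'` on `{1,…,ℓ}` such that the subgraph of `T'` induced by
`{1,…,k}` equals `T`, exactly one edge of `T'` joins `{1,…,k}` to `{k+1,…,ℓ}`, and that
edge is incident to `v`, equals `(ℓ-k)^{ℓ-k-1}`. -/
theorem count_supertrees (k l : ℕ) (hk : 1 ≤ k) (hkl : k < l)
    (T : SimpleGraph (Fin k)) (hT : T.IsTree) (v : Fin k) :
    Nat.card {T' : SimpleGraph (Fin l) //
      T'.IsTree ∧
      (∀ i j : Fin k, T'.Adj (Fin.castLE hkl.le i) (Fin.castLE hkl.le j) ↔ T.Adj i j) ∧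
      (∀ a b : Fin l, (a : ℕ) < k → ¬ (b : ℕ) < k → T'.Adj a b → a = Fin.castLE hkl.le v) ∧
      (∃! b : Fin l, ¬ (b : ℕ) < k ∧ T'.Adj (Fin.castLE hkl.le v) b)} =
    (l - k) ^ (l - k - 1) := by
  have : Nonempty ↥(Set.range (Fin.castLEEmb hkl.le))ᶜ := ⟨⟨k, hkl⟩, by simp⟩
  have h := count_supertrees_general (Fin.castLEEmb hkl.le) hT v
  rw [card_compl_range, Nat.card_fin, Nat.card_fin] at h
  simpa using h
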